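/- Let n ≥ 3 and let σ be an admissible signature function on the triples of [n]. Then for every integer k with 0 ≤ k < n/2 − 1, E_{≤≤k}(σ) ≥ 3·C(k+3, 3). -/

import Mathlib

/-- `Zval n` is Hill's conjectured value
`Z(n) = (1/4)⌊n/2⌋⌊(n−1)/2⌋⌊(n−2)/2⌋⌊(n−3)/2⌋` for the crossing number of `K n`.
(The product of the four floors is always divisible by 4, so natural division is exact.) -/
def Zval (n : ℕ) : ℕ :=
  n / 2 * ((n - 1) / 2) * ((n - 2) / 2) * ((n - 3) / 2) / 4

/-- An x-monotone drawing of the complete graph `K n`: vertices `v i = (x i, 0)` with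
`x` strictly increasing, and for each pair `i < j` a continuous function `e i j` on
`[x i, x j]` vanishing at the endpoints, whose graph is the arc of the edge `{i, j}`.
Edges avoid the intermediate vertices, any two distinct edges meet in finitely many
interior parameters, and at each such common point the difference changes sign
(a proper crossing). -/
structure XMonotoneDrawing (n : ℕ) where
  x : Fin n → ℝ
  x_strictMono : StrictMono x
  e : Fin n → Fin n → ℝ → ℝ
  cont : ∀ i j : Fin n, i < j → ContinuousOn (e i j) (Set.Icc (x i) (x j))
  end_left : ∀ i j : Fin n, i < j → e i j (x i) = 0
  end_right : ∀ i j : Fin n, i < j → e i j (x j) = 0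
  avoid_vertex : ∀ i m j : Fin n, i < m → m < j → e i j (x m) ≠ 0
  cross_finite : ∀ i j k l : Fin n, i < j → k < l → (i, j) ≠ (k, l) →
    {t : ℝ | max (x i) (x k) < t ∧ t < min (x j) (x l) ∧ e i j t = e k l t}.Finite
  sign_change : ∀ i j k l : Fin n, i < j → k < l → (i, j) ≠ (k, l) →
    ∀ t : ℝ, max (x i) (x k) < t → t < min (x j) (x l) → e i j t = e k l t →
      ∃ ε > (0 : ℝ), ∀ s : ℝ, max (x i) (x k) < s → t - ε < s → s < t →
        ∀ u : ℝ, u < min (x j) (x l) → t < u → u < t + ε →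
          (e i j s - e k l s) * (e i j u - e k l u) < 0

namespace XMonotoneDrawing

variable {n : ℕ}

/-- The set of parameters at which the edges `{i,j}` and `{k,l}` cross
(both edges are parametrized over the `x`-axis). -/
def crossSet (D : XMonotoneDrawing n) (i j k l : Fin n) : Set ℝ :=
  {t : ℝ | max (D.x i) (D.x k) < t ∧ t < min (D.x j) (D.x l) ∧ D.e i j t = D.e k l t}

/-- The number of crossings between the edges `{i,j}` and `{k,l}`. -/
noncomputable def crossCount (D : XMonotoneDrawing n) (i j k l : Fin n) : ℕ :=
  (D.crossSet i j k l).ncard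

/-- Two edges `{i,j}` and `{k,l}` are adjacent if they share an endpoint index. -/
def Adj (i j k l : Fin n) : Prop := i = k ∨ i = l ∨ j = k ∨ j = l

/-- A drawing is semisimple if no two adjacent edges cross. -/
def Semisimple (D : XMonotoneDrawing n) : Prop :=
  ∀ i j k l : Fin n, i < j → k < l → (i, j) ≠ (k, l) → Adj i j k l →
    D.crossCount i j k l = 0

/-- A drawing is weakly semisimple if every two adjacent edges cross an even
number of times. -/
def WeaklySemisimple (D : XMonotoneDrawing n) : Prop :=
  ∀ i j k l : Fin n, i < j → k < l → (i, j) ≠ (k, l) → Adj i j k l →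
    Even (D.crossCount i j k l)

/-- A drawing is simple if no two adjacent edges cross and every two non-adjacent
edges cross at most once. -/
def Simple (D : XMonotoneDrawing n) : Prop :=
  ∀ i j k l : Fin n, i < j → k < l → (i, j) ≠ (k, l) →
    (Adj i j k l → D.crossCount i j k l = 0) ∧
    (¬ Adj i j k l → D.crossCount i j k l ≤ 1)

/-- `cr D`: the total number of crossings of `D`. (Each unordered pair of distinct
edges is counted twice in the sum, whence the division by 2; `crossCount` is
symmetric in the two edges.) -/
noncomputable def cr (D : XMonotoneDrawing n) : ℕ :=
  (∑ p : (Fin n × Fin n) × (Fin n × Fin n),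
      if p.1.1 < p.1.2 ∧ p.2.1 < p.2.2 ∧ p.1 ≠ p.2 then
        D.crossCount p.1.1 p.1.2 p.2.1 p.2.2
      else 0) / 2

/-- `ocr D`: the number of unordered pairs of edges of `D` crossing an odd number
of times. (Each unordered pair appears twice as an ordered pair.) -/
noncomputable def ocr (D : XMonotoneDrawing n) : ℕ :=
  {p : (Fin n × Fin n) × (Fin n × Fin n) |
    p.1.1 < p.1.2 ∧ p.2.1 < p.2.2 ∧ p.1 ≠ p.2 ∧
      Odd (D.crossCount p.1.1 p.1.2 p.2.1 p.2.2)}.ncard / 2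

/-- The signature of the triple `i < j < k`: `true` (i.e. `+`) if the vertex `v j`
lies below the edge `{i, k}`, i.e. `e i k (x j) > 0`, and `false` (i.e. `−`) otherwise. -/
noncomputable def sig (D : XMonotoneDrawing n) (i j k : Fin n) : Bool :=
  if 0 < D.e i k (D.x j) then true else false

/-- `D` realizes the signature function `σ` if `σ_D` and `σ` agree on all
increasing triples. -/
def Realizes (D : XMonotoneDrawing n) (σ : Fin n → Fin n → Fin n → Bool) : Prop :=
  ∀ i j k : Fin n, i < j → j < k → D.sig i j k = σ i j k

/-- A drawing is pseudolinear if its edges extend to continuous curves over all of `ℝ`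
that avoid all vertices other than their endpoints and such that any two of these
extended curves cross exactly once (the crossing being a sign change of the difference). -/
def Pseudolinear (D : XMonotoneDrawing n) : Prop :=
  ∃ p : Fin n → Fin n → ℝ → ℝ,
    (∀ i j : Fin n, i < j → Continuous (p i j)) ∧
    (∀ i j : Fin n, i < j → ∀ t ∈ Set.Icc (D.x i) (D.x j), p i j t = D.e i j t) ∧
    (∀ i j m : Fin n, i < j → m ≠ i → m ≠ j → p i j (D.x m) ≠ 0) ∧
    (∀ i j k l : Fin n, i < j → k < l → (i, j) ≠ (k, l) →
      ∃ t : ℝ, p i j t = p k l t ∧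
        ∀ s u : ℝ, s < t → t < u →
          (p i j s - p k l s) * (p i j u - p k l u) < 0)

/-- The arc of the edge `{i, j}` as a subset of the plane `ℝ × ℝ`. -/
def edgeArc (D : XMonotoneDrawing n) (i j : Fin n) : Set (ℝ × ℝ) :=
  {q : ℝ × ℝ | D.x i ≤ q.1 ∧ q.1 ≤ D.x j ∧ q.2 = D.e i j q.1}

/-- The union of all edge arcs of the drawing. -/
def arcUnion (D : XMonotoneDrawing n) : Set (ℝ × ℝ) :=
  ⋃ i : Fin n, ⋃ j : Fin n, ⋃ (_ : i < j), D.edgeArc i j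

end XMonotoneDrawing

namespace Sig

variable {n : ℕ}

/-- With respect to a signature function `σ`, the vertex `m ∉ {i, j}` is on the left of
the directed edge `(i, j)` (where `i < j`). -/
def LeftOf (σ : Fin n → Fin n → Fin n → Bool) (i j m : Fin n) : Prop :=
  (i < m ∧ m < j ∧ σ i m j = false) ∨ (m < i ∧ σ m i j = true) ∨ (j < m ∧ σ i j m = true)

/-- The number of vertices on the left of the directed edge `(i, j)`. -/
noncomputable def leftCount (σ : Fin n → Fin n → Fin n → Bool) (i j : Fin n) : ℕ :=
  {m : Fin n | LeftOf σ i j m}.ncard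

/-- The edge `{i, j}` (with `i < j`) is a `k`-edge of `σ` if `min(ℓ, n − 2 − ℓ) = k`,
where `ℓ` is the number of vertices on its left. -/
def IsKEdge (σ : Fin n → Fin n → Fin n → Bool) (k : ℕ) (i j : Fin n) : Prop :=
  min (leftCount σ i j) (n - 2 - leftCount σ i j) = k

/-- `Ek σ k`: the number of `k`-edges of `σ`. -/
noncomputable def Ek (σ : Fin n → Fin n → Fin n → Bool) (k : ℕ) : ℕ :=
  {p : Fin n × Fin n | p.1 < p.2 ∧ IsKEdge σ k p.1 p.2}.ncard

/-- `Ele σ k = E_{≤k}(σ)`: the number of `≤k`-edges of `σ`. -/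
noncomputable def Ele (σ : Fin n → Fin n → Fin n → Bool) (k : ℕ) : ℕ :=
  ∑ i ∈ Finset.range (k + 1), Ek σ i

/-- `Elele σ k = E_{≤≤k}(σ) = Σ_{j=0}^{k} E_{≤j}(σ)`. -/
noncomputable def Elele (σ : Fin n → Fin n → Fin n → Bool) (k : ℕ) : ℕ :=
  ∑ j ∈ Finset.range (k + 1), Ele σ j

/-- `E_{≤≤k}` with an integer index, which vanishes for negative `k`. -/
noncomputable def ElelZ (σ : Fin n → Fin n → Fin n → Bool) (k : ℤ) : ℕ :=
  if 0 ≤ k then Elele σ k.toNat else 0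

/-- The left count of the edge `{i, j}` in the drawing restricted to the first
`n − 1` vertices (the last vertex deleted). -/
noncomputable def leftCountRes (σ : Fin n → Fin n → Fin n → Bool) (i j : Fin n) : ℕ :=
  {m : Fin n | LeftOf σ i j m ∧ (m : ℕ) + 1 < n}.ncard

/-- The edge `{i, j}` is a `k`-edge of the restriction of `σ` to the first `n − 1`
vertices (there `min(ℓ', (n−1) − 2 − ℓ') = k`). -/
def IsKEdgeRes (σ : Fin n → Fin n → Fin n → Bool) (k : ℕ) (i j : Fin n) : Prop :=
  min (leftCountRes σ i j) (n - 3 - leftCountRes σ i j) = k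

/-- The edge `{i, j}` is a `(D,D')`-invariant `≤k`-edge: it avoids the last vertex and
is an `m`-edge with `m ≤ k` both in `σ` and in the restriction of `σ` to the first
`n − 1` vertices. -/
def InvariantLeK (σ : Fin n → Fin n → Fin n → Bool) (k : ℕ) (i j : Fin n) : Prop :=
  (j : ℕ) + 1 < n ∧ (∃ m ≤ k, IsKEdge σ m i j) ∧ (∃ m ≤ k, IsKEdgeRes σ m i j)

/-- The ten 4-tuple forms allowed in signature functions of semisimple x-monotone
drawings: `++++, −−−−, ++−−, −−++, −++−, +−−+, −−−+, +++−, +−−−, −+++`. -/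
def AllowedForm (a b c d : Bool) : Prop :=
  (a, b, c, d) ∈ ([(true, true, true, true), (false, false, false, false),
    (true, true, false, false), (false, false, true, true),
    (false, true, true, false), (true, false, false, true),
    (false, false, false, true), (true, true, true, false),
    (true, false, false, false), (false, true, true, true)] :
      List (Bool × Bool × Bool × Bool))

/-- A signature function is admissible if every increasing 4-tuple is of one of the
ten allowed forms. -/
def Admissible (σ : Fin n → Fin n → Fin n → Bool) : Prop :=
  ∀ a b c d : Fin n, a < b → b < c → c < d →
    AllowedForm (σ a b c) (σ a b d) (σ a c d) (σ b c d)

/-- The six convex forms: `++++, −−−−, ++−−, −−++, −++−, +−−+`. -/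
def ConvexForm (a b c d : Bool) : Prop :=
  (a, b, c, d) ∈ ([(true, true, true, true), (false, false, false, false),
    (true, true, false, false), (false, false, true, true),
    (false, true, true, false), (true, false, false, true)] :
      List (Bool × Bool × Bool × Bool))

/-- The 4-tuple `a < b < c < d` is convex in `σ`. -/
def Convex4 (σ : Fin n → Fin n → Fin n → Bool) (a b c d : Fin n) : Prop :=
  ConvexForm (σ a b c) (σ a b d) (σ a c d) (σ b c d)

/-- The eight 4-tuple forms of pseudolinear x-monotone drawings (the sign-monotone
sequences): `++++, +++−, ++−−, +−−−, −−−−, −−−+, −−++, −+++`. -/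
def PLForm (a b c d : Bool) : Prop :=
  (a, b, c, d) ∈ ([(true, true, true, true), (true, true, true, false),
    (true, true, false, false), (true, false, false, false),
    (false, false, false, false), (false, false, false, true),
    (false, false, true, true), (false, true, true, true)] :
      List (Bool × Bool × Bool × Bool))

/-- The relation `j ⋖ k` on `{j : i < j}`: `j ⋖ k` iff (`j < k` and `σ i j k = +`)
or (`k < j` and `σ i k j = −`). -/
def Below (σ : Fin n → Fin n → Fin n → Bool) (i j k : Fin n) : Prop :=
  (j < k ∧ σ i j k = true) ∨ (k < j ∧ σ i k j = false)

end Sig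

namespace Sig

/-- The triples sharing their first, respectively last, index inside an increasing
quadruple below `n` never alternate in sign. -/
def NonAlternating (σ : ℕ → ℕ → ℕ → Bool) (n : ℕ) : Prop :=
  ∀ a b c d : ℕ, a < b → b < c → c < d → d < n →
    (σ a b c = σ a c d → σ a b d = σ a b c) ∧ (σ a b d = σ b c d → σ a c d = σ a b d)

/-- `LeftOf` for signature functions on the natural numbers. -/
def NatLeftOf (σ : ℕ → ℕ → ℕ → Bool) (i j m : ℕ) : Prop :=
  (i < m ∧ m < j ∧ σ i m j = false) ∨ (m < i ∧ σ m i j = true) ∨ (j < m ∧ σ i j m = true)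

instance (σ : ℕ → ℕ → ℕ → Bool) (i j m : ℕ) : Decidable (NatLeftOf σ i j m) := by
  unfold NatLeftOf; infer_instance

/-- The number of vertices below `n` on the left of the edge `(i, j)`. -/
def natLeftCount (σ : ℕ → ℕ → ℕ → Bool) (n i j : ℕ) : ℕ :=
  ((Finset.range n).filter (NatLeftOf σ i j)).card

/-- The number `k` such that `{i, j}` is a `k`-edge of `σ` on the first `n` vertices. -/
def edgeDepth (σ : ℕ → ℕ → ℕ → Bool) (n i j : ℕ) : ℕ :=
  min (natLeftCount σ n i j) (n - 2 - natLeftCount σ n i j)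

/-- The total of `K - k` over all `k`-edges with `k < K`; this is `E_{≤≤K-1}`. -/
def depthWeight (σ : ℕ → ℕ → ℕ → Bool) (n K : ℕ) : ℕ :=
  ∑ j ∈ Finset.range n, ∑ i ∈ Finset.range j, (K - edgeDepth σ n i j)

section Rank

variable {α : Type*} {S : Finset α} {r : α → α → Prop} [DecidableRel r]

theorem rank_lt_rank (irr : ∀ a ∈ S, ¬ r a a)
    (tr : ∀ a ∈ S, ∀ b ∈ S, ∀ c ∈ S, r a b → r b c → r a c)
    {a b : α} (ha : a ∈ S) (hb : b ∈ S) (h : r a b) :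
    (S.filter (r · a)).card < (S.filter (r · b)).card := by
  apply Finset.card_lt_card
  rw [Finset.ssubset_iff_of_subset]
  · exact ⟨a, by simp [ha, h], by simp [irr a ha]⟩
  · intro c hc
    simp only [Finset.mem_filter] at hc ⊢
    exact ⟨hc.1, tr c hc.1 a ha b hb hc.2 h⟩

theorem rank_injOn (irr : ∀ a ∈ S, ¬ r a a)
    (tr : ∀ a ∈ S, ∀ b ∈ S, ∀ c ∈ S, r a b → r b c → r a c)
    (tot : ∀ a ∈ S, ∀ b ∈ S, a ≠ b → r a b ∨ r b a) :
    Set.InjOn (fun a => (S.filter (r · a)).card) (S : Set α) := by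
  intro a ha b hb hab
  by_contra hne
  simp only at hab
  rcases tot a ha b hb hne with h | h
  · have := rank_lt_rank irr tr ha hb h
    omega
  · have := rank_lt_rank irr tr hb ha h
    omega

theorem image_rank (irr : ∀ a ∈ S, ¬ r a a)
    (tr : ∀ a ∈ S, ∀ b ∈ S, ∀ c ∈ S, r a b → r b c → r a c)
    (tot : ∀ a ∈ S, ∀ b ∈ S, a ≠ b → r a b ∨ r b a) :
    S.image (fun a => (S.filter (r · a)).card) = Finset.range S.card := by
  apply Finset.eq_of_subset_of_card_le
  · intro t ht
    obtain ⟨a, ha, rfl⟩ := Finset.mem_image.1 ht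
    rw [Finset.mem_range]
    apply Finset.card_lt_card
    rw [Finset.ssubset_iff_of_subset (Finset.filter_subset _ _)]
    exact ⟨a, ha, by simp [irr a ha]⟩
  · rw [Finset.card_image_of_injOn (rank_injOn irr tr tot), Finset.card_range]

end Rank

variable {σ : ℕ → ℕ → ℕ → Bool} {n : ℕ}

theorem not_natLeftOf_right {i j : ℕ} (h : i < j) : ¬ NatLeftOf σ i j j := by
  simp only [NatLeftOf]; omega

theorem not_natLeftOf_left {i j : ℕ} (h : i < j) : ¬ NatLeftOf σ i j i := by
  simp only [NatLeftOf]; omega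

/-- Around `i`, the vertices to its right are linearly ordered by "left of". -/
theorem natLeftOf_trans_right (hσ : NonAlternating σ n) {i a b c : ℕ}
    (ha : i < a) (hb : i < b) (hc : i < c) (han : a < n) (hbn : b < n) (hcn : c < n)
    (hab : NatLeftOf σ i b a) (hbc : NatLeftOf σ i c b) : NatLeftOf σ i c a := by
  have key := hσ i
  simp only [NatLeftOf] at *
  have e1 := key a b c
  have e2 := key a c b
  have e3 := key b a c
  have e4 := key b c a
  have e5 := key c a b
  have e6 := key c b a
  grind

theorem natLeftOf_total_right {i a b : ℕ} (ha : i < a) (hb : i < b) (hab : a ≠ b) :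
    NatLeftOf σ i b a ∨ NatLeftOf σ i a b := by
  simp only [NatLeftOf]
  grind

/-- Around the last vertex, the other vertices are linearly ordered by "left of". -/
theorem natLeftOf_trans_last (hσ : NonAlternating σ (n + 1)) {a b c : ℕ}
    (han : a < n) (hbn : b < n) (hcn : c < n)
    (hab : NatLeftOf σ b n a) (hbc : NatLeftOf σ c n b) : NatLeftOf σ c n a := by
  have key := fun x y z => hσ x y z n
  simp only [NatLeftOf] at *
  have e1 := key a b c
  have e2 := key a c b
  have e3 := key b a c
  have e4 := key b c a
  have e5 := key c a b
  have e6 := key c b a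
  grind

theorem natLeftOf_total_last {a b : ℕ} (ha : a < n) (hb : b < n) (hab : a ≠ b) :
    NatLeftOf σ b n a ∨ NatLeftOf σ a n b := by
  simp only [NatLeftOf]
  grind

theorem natLeftCount_succ (σ : ℕ → ℕ → ℕ → Bool) (n i j : ℕ) :
    natLeftCount σ (n + 1) i j = natLeftCount σ n i j + if NatLeftOf σ i j n then 1 else 0 := by
  simp only [natLeftCount, Finset.range_add_one, Finset.filter_insert]
  split_ifs <;> simp

theorem sum_range_sub_eq_choose (K : ℕ) :
    ∑ i ∈ Finset.range (K + 1), (K + 1 - i) = (K + 2).choose 2 := by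
  rw [← Finset.sum_range_reflect, Finset.sum_congr rfl (g := fun i => i + 1)]
  · have h := Finset.sum_range_id (K + 2)
    rw [Finset.sum_range_succ'] at h
    rw [Nat.choose_two_right]
    simpa using h
  · intro i hi
    have := Finset.mem_range.1 hi
    omega

theorem two_mul_choose_le_sum_sub_min {K : ℕ} (hn : 2 * K + 2 ≤ n) :
    2 * (K + 2).choose 2 ≤ ∑ t ∈ Finset.range n, (K + 1 - min t (n - 1 - t)) := by
  obtain ⟨d, rfl⟩ := Nat.exists_eq_add_of_le hn
  have hsplit : 2 * K + 2 + d = (K + 1) + d + (K + 1) := by omega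
  rw [hsplit, Finset.sum_range_add, Finset.sum_range_add, two_mul]
  have h₁ : (K + 2).choose 2 ≤ ∑ t ∈ Finset.range (K + 1),
      (K + 1 - min t (K + 1 + d + (K + 1) - 1 - t)) := by
    rw [← sum_range_sub_eq_choose]
    exact Finset.sum_le_sum fun t _ => by omega
  have h₂ : (K + 2).choose 2 ≤ ∑ t ∈ Finset.range (K + 1),
      (K + 1 - min (K + 1 + d + t) (K + 1 + d + (K + 1) - 1 - (K + 1 + d + t))) := by
    rw [← sum_range_sub_eq_choose, ← Finset.sum_range_reflect]
    refine Finset.sum_le_sum fun t ht => ?_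
    have := Finset.mem_range.1 ht
    omega
  omega

/-- The edges at the last vertex contribute at least two `t`-edges for each `t ≤ K`. -/
theorem le_sum_last (hσ : NonAlternating σ (n + 1)) {K : ℕ} (hn : 2 * K + 2 ≤ n) :
    2 * (K + 2).choose 2 ≤ ∑ i ∈ Finset.range n, (K + 1 - edgeDepth σ (n + 1) i n) := by
  have irr : ∀ a ∈ Finset.range n, ¬ NatLeftOf σ a n a := fun a ha =>
    not_natLeftOf_left (Finset.mem_range.1 ha)
  have tr : ∀ a ∈ Finset.range n, ∀ b ∈ Finset.range n, ∀ c ∈ Finset.range n,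
      NatLeftOf σ b n a → NatLeftOf σ c n b → NatLeftOf σ c n a := by
    intro a ha b hb c hc
    simp only [Finset.mem_range] at ha hb hc
    exact natLeftOf_trans_last hσ ha hb hc
  have tot : ∀ a ∈ Finset.range n, ∀ b ∈ Finset.range n, a ≠ b →
      NatLeftOf σ b n a ∨ NatLeftOf σ a n b := by
    intro a ha b hb
    simp only [Finset.mem_range] at ha hb
    exact natLeftOf_total_last ha hb
  have him := image_rank (r := fun m i => NatLeftOf σ i n m) irr tr tot
  have hinj := rank_injOn (r := fun m i => NatLeftOf σ i n m) irr tr tot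
  rw [Finset.card_range] at him
  refine (two_mul_choose_le_sum_sub_min hn).trans ?_
  conv_lhs => rw [← him]
  rw [Finset.sum_image hinj]
  refine (Finset.sum_congr rfl fun i hi => ?_).le
  have h := natLeftCount_succ σ n i n
  rw [if_neg (not_natLeftOf_right (Finset.mem_range.1 hi))] at h
  rw [edgeDepth, h]
  rfl

/-- Adding the vertex `n` keeps `{i, j}` a `k`-edge for some `k ≤ K`. -/
def Invariant (σ : ℕ → ℕ → ℕ → Bool) (n K i j : ℕ) : Prop :=
  (¬ NatLeftOf σ i j n ∧ natLeftCount σ n i j ≤ K) ∨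
    (NatLeftOf σ i j n ∧ n - 2 - natLeftCount σ n i j ≤ K)

instance (σ : ℕ → ℕ → ℕ → Bool) (n K i j : ℕ) : Decidable (Invariant σ n K i j) := by
  unfold Invariant; infer_instance

theorem sub_edgeDepth_add_le {K i j : ℕ} (hn : 2 * K + 2 ≤ n) :
    (K - edgeDepth σ n i j) + (if Invariant σ n K i j then 1 else 0) ≤
      K + 1 - edgeDepth σ (n + 1) i j := by
  have h := natLeftCount_succ σ n i j
  simp only [edgeDepth, Invariant, h]
  by_cases hl : NatLeftOf σ i j n
  · simp only [hl, not_true, false_and, true_and, false_or, if_true]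
    split_ifs <;> omega
  · simp only [hl, not_false_eq_true, false_and, true_and, or_false, if_false]
    split_ifs <;> omega

theorem le_card_invariant (hσ : NonAlternating σ (n + 1)) {K i : ℕ} (hn : 2 * K + 2 ≤ n)
    (hi : i ≤ K) :
    K + 1 - i ≤ ((Finset.Ioo i n).filter (Invariant σ n K i)).card := by
  set S := Finset.Ioc i n with hS
  have irr : ∀ a ∈ S, ¬ NatLeftOf σ i a a := fun a ha =>
    not_natLeftOf_right (Finset.mem_Ioc.1 ha).1
  have tr : ∀ a ∈ S, ∀ b ∈ S, ∀ c ∈ S,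
      NatLeftOf σ i b a → NatLeftOf σ i c b → NatLeftOf σ i c a := by
    intro a ha b hb c hc
    simp only [hS, Finset.mem_Ioc] at ha hb hc
    exact natLeftOf_trans_right hσ ha.1 hb.1 hc.1 (by omega) (by omega) (by omega)
  have tot : ∀ a ∈ S, ∀ b ∈ S, a ≠ b → NatLeftOf σ i b a ∨ NatLeftOf σ i a b := by
    intro a ha b hb
    simp only [hS, Finset.mem_Ioc] at ha hb
    exact natLeftOf_total_right ha.1 hb.1
  have him := image_rank (r := fun m j => NatLeftOf σ i j m) irr tr tot
  have hlt := fun {a b : ℕ} => rank_lt_rank (r := fun m j => NatLeftOf σ i j m) (a := a) (b := b)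
    irr tr
  set rank : ℕ → ℕ := fun j => (S.filter (NatLeftOf σ i j)).card with hrank
  change S.image rank = _ at him
  change ∀ {a b : ℕ}, a ∈ S → b ∈ S → NatLeftOf σ i b a → rank a < rank b at hlt
  have hcard : S.card = n - i := by simp [hS]
  rw [hcard] at him
  have hnS : n ∈ S := by simp only [hS, Finset.mem_Ioc]; omega
  -- the target ranks: the extreme ranks on the appropriate side of the rank of `n`
  set f : ℕ → ℕ := fun s => if s < rank n then s else n - i - 1 - s with hf
  have hfinj : Set.InjOn f (Finset.range (K + 1 - i) : Set ℕ) := by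
    intro s hs t ht hst
    simp only [Finset.coe_range, Set.mem_Iio] at hs ht
    simp only [hf] at hst
    split_ifs at hst <;> omega
  have hsub : (Finset.range (K + 1 - i)).image f ⊆
      ((Finset.Ioo i n).filter (Invariant σ n K i)).image rank := by
    intro t ht
    obtain ⟨s, hs, rfl⟩ := Finset.mem_image.1 ht
    rw [Finset.mem_range] at hs
    have hmem : f s ∈ S.image rank := by
      rw [him, Finset.mem_range]
      simp only [hf]
      split_ifs <;> omega
    obtain ⟨j, hj, hjs⟩ := Finset.mem_image.1 hmem
    have hne : j ≠ n := by
      rintro rfl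
      simp only [hf] at hjs
      split_ifs at hjs <;> omega
    have hj' := hj
    simp only [hS, Finset.mem_Ioc] at hj'
    refine Finset.mem_image.2 ⟨j, ?_, hjs⟩
    rw [Finset.mem_filter, Finset.mem_Ioo]
    refine ⟨by omega, ?_⟩
    have hupper : natLeftCount σ n i j ≤ i + rank j := by
      have hss : (Finset.range n).filter (NatLeftOf σ i j) ⊆
          Finset.range i ∪ S.filter (NatLeftOf σ i j) := by
        intro m hm
        simp only [Finset.mem_filter, Finset.mem_range, Finset.mem_union, hS,
          Finset.mem_Ioc] at hm ⊢
        rcases lt_trichotomy m i with h | h | h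
        · exact Or.inl h
        · exact absurd (h ▸ hm.2) (not_natLeftOf_left hj'.1)
        · exact Or.inr ⟨⟨h, by omega⟩, hm.2⟩
      calc natLeftCount σ n i j ≤ _ := Finset.card_le_card hss
        _ ≤ _ := Finset.card_union_le _ _
        _ = _ := by rw [Finset.card_range]
    have hlower : rank j ≤ natLeftCount σ (n + 1) i j := by
      apply Finset.card_le_card
      intro m hm
      simp only [Finset.mem_filter, Finset.mem_range, hS, Finset.mem_Ioc] at hm ⊢
      exact ⟨by omega, hm.2⟩
    rw [natLeftCount_succ] at hlower
    by_cases hl : NatLeftOf σ i j n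
    · have := hlt hnS hj hl
      rw [if_pos hl] at hlower
      refine Or.inr ⟨hl, ?_⟩
      simp only [hf] at hjs
      split_ifs at hjs <;> omega
    · have := hlt hj hnS ((tot j hj n hnS hne).resolve_right hl)
      refine Or.inl ⟨hl, ?_⟩
      simp only [hf] at hjs
      split_ifs at hjs <;> omega
  calc K + 1 - i = ((Finset.range (K + 1 - i)).image f).card := by
        rw [Finset.card_image_of_injOn hfinj, Finset.card_range]
    _ ≤ _ := Finset.card_le_card hsub
    _ ≤ _ := Finset.card_image_le

theorem choose_le_sum_invariant (hσ : NonAlternating σ (n + 1)) {K : ℕ} (hn : 2 * K + 2 ≤ n) :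
    (K + 2).choose 2 ≤ ∑ j ∈ Finset.range n, ∑ i ∈ Finset.range j,
      if Invariant σ n K i j then 1 else 0 := by
  have hswap : ∑ j ∈ Finset.range n, ∑ i ∈ Finset.range j,
      (if Invariant σ n K i j then 1 else 0) =
      ∑ i ∈ Finset.range n, ∑ j ∈ Finset.Ioo i n, if Invariant σ n K i j then 1 else 0 := by
    apply Finset.sum_comm'
    intro j i
    simp only [Finset.mem_range, Finset.mem_Ioo]
    omega
  rw [hswap, ← sum_range_sub_eq_choose]
  calc ∑ i ∈ Finset.range (K + 1), (K + 1 - i)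
      ≤ ∑ i ∈ Finset.range (K + 1), ∑ j ∈ Finset.Ioo i n,
          if Invariant σ n K i j then 1 else 0 := by
        refine Finset.sum_le_sum fun i hi => ?_
        rw [← Finset.card_filter]
        exact le_card_invariant hσ hn (Nat.lt_succ_iff.1 (Finset.mem_range.1 hi))
    _ ≤ _ := Finset.sum_le_sum_of_subset (Finset.range_subset_range.2 (by omega))

theorem depthWeight_succ_ge (hσ : NonAlternating σ (n + 1)) {K : ℕ} (hn : 2 * K + 2 ≤ n) :
    depthWeight σ n K + 3 * (K + 2).choose 2 ≤ depthWeight σ (n + 1) (K + 1) := by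
  have h₁ := le_sum_last hσ hn
  have h₂ := choose_le_sum_invariant hσ hn
  have h₃ : depthWeight σ n K + ∑ j ∈ Finset.range n, ∑ i ∈ Finset.range j,
      (if Invariant σ n K i j then 1 else 0) ≤
      ∑ j ∈ Finset.range n, ∑ i ∈ Finset.range j, (K + 1 - edgeDepth σ (n + 1) i j) := by
    simp only [depthWeight, ← Finset.sum_add_distrib]
    exact Finset.sum_le_sum fun j _ => Finset.sum_le_sum fun i _ => sub_edgeDepth_add_le hn
  have h₄ : depthWeight σ (n + 1) (K + 1) = _ := Finset.sum_range_succ _ _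
  omega

theorem choose_le_depthWeight (hσ : NonAlternating σ n) {K : ℕ} (hK : 2 * K < n) :
    3 * (K + 2).choose 3 ≤ depthWeight σ n K := by
  induction n generalizing K with
  | zero => omega
  | succ n ih =>
    cases K with
    | zero => simp [Nat.choose]
    | succ K =>
      have h := depthWeight_succ_ge hσ (K := K) (by omega)
      have h' := ih (fun a b c d hab hbc hcd hd => hσ a b c d hab hbc hcd (by omega))
        (K := K) (by omega)
      have hc : (K + 1 + 2).choose 3 = (K + 2).choose 2 + (K + 2).choose 3 :=
        Nat.choose_succ_succ _ _
      omega

/-- Extension of a signature function on `Fin n` to the natural numbers. -/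
def extend (σ : Fin n → Fin n → Fin n → Bool) (a b c : ℕ) : Bool :=
  if h : a < n ∧ b < n ∧ c < n then σ ⟨a, h.1⟩ ⟨b, h.2.1⟩ ⟨c, h.2.2⟩ else false

theorem extend_val (σ : Fin n → Fin n → Fin n → Bool) (a b c : Fin n) :
    extend σ a b c = σ a b c := by
  simp [extend]

theorem AllowedForm.nonAlternating {a b c d : Bool} (h : AllowedForm a b c d) :
    (a = c → b = a) ∧ (b = d → c = b) := by
  revert a b c d
  unfold AllowedForm
  decide

theorem Admissible.nonAlternating {σ : Fin n → Fin n → Fin n → Bool} (hσ : Admissible σ) :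
    NonAlternating (extend σ) n := by
  intro a b c d hab hbc hcd hd
  have h := (hσ ⟨a, by omega⟩ ⟨b, by omega⟩ ⟨c, by omega⟩ ⟨d, hd⟩ hab hbc hcd).nonAlternating
  simpa only [← extend_val] using h

theorem leftCount_eq_natLeftCount (σ : Fin n → Fin n → Fin n → Bool) (i j : Fin n) :
    leftCount σ i j = natLeftCount (extend σ) n i j := by
  classical
  rw [leftCount, Set.ncard_eq_toFinset_card', Set.toFinset_ofPred, Finset.card_filter,
    natLeftCount, Finset.card_filter, ← Fin.sum_univ_eq_sum_range]
  simp only [LeftOf, NatLeftOf, extend_val, Fin.lt_def]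

theorem sum_sum_indicator_eq_sub (v K : ℕ) :
    ∑ j ∈ Finset.range K, ∑ i ∈ Finset.range (j + 1), (if v = i then 1 else 0) = K - v := by
  induction K with
  | zero => simp
  | succ K ih =>
    rw [Finset.sum_range_succ, ih, Finset.sum_ite_eq]
    simp only [Finset.mem_range]
    split_ifs <;> omega

theorem Ek_eq_sum (σ : Fin n → Fin n → Fin n → Bool) (k : ℕ) :
    Ek σ k = ∑ j ∈ Finset.range n, ∑ i ∈ Finset.range j,
      if edgeDepth (extend σ) n i j = k then 1 else 0 := by
  classical
  have hrange : ∀ j ∈ Finset.range n,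
      ∑ i ∈ Finset.range j, (if edgeDepth (extend σ) n i j = k then 1 else 0) =
      ∑ i ∈ Finset.range n, if i < j ∧ edgeDepth (extend σ) n i j = k then 1 else 0 := by
    intro j hj
    have hj' := Finset.mem_range.1 hj
    simp only [ite_and]
    conv_rhs => rw [← Finset.sum_filter]
    congr 1
    ext i
    simp only [Finset.mem_range, Finset.mem_filter]
    omega
  rw [Finset.sum_congr rfl hrange, Ek, Set.ncard_eq_toFinset_card', Set.toFinset_ofPred,
    Finset.card_filter, Fintype.sum_prod_type_right, ← Fin.sum_univ_eq_sum_range]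
  refine Finset.sum_congr rfl fun j _ => ?_
  rw [← Fin.sum_univ_eq_sum_range]
  simp only [IsKEdge, leftCount_eq_natLeftCount, edgeDepth, Fin.lt_def]
  congr!

theorem Elele_eq_depthWeight (σ : Fin n → Fin n → Fin n → Bool) (k : ℕ) :
    Elele σ k = depthWeight (extend σ) n (k + 1) := by
  simp only [Elele, Ele, Ek_eq_sum, depthWeight, ← sum_sum_indicator_eq_sub]
  simp only [Finset.sum_comm (s := Finset.range (_ + 1)) (t := Finset.range n)]
  refine Finset.sum_congr rfl fun j _ => ?_
  simp only [Finset.sum_comm (s := Finset.range (_ + 1)) (t := Finset.range j)]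

end Sig

/-- Let `n ≥ 3` and let `σ` be an admissible signature function on the
triples of `[n]`. For every integer `k` with `0 ≤ k < n/2 − 1` (i.e. `2k + 2 < n`),
`E_{≤≤k}(σ) ≥ 3·C(k+3, 3)`. -/
theorem admissible_Elele_lower_bound (n : ℕ) (hn : 3 ≤ n)
    (σ : Fin n → Fin n → Fin n → Bool) (hσ : Sig.Admissible σ)
    (k : ℕ) (hk : 2 * k + 2 < n) :
    3 * (k + 3).choose 3 ≤ Sig.Elele σ k := by
  rw [Sig.Elele_eq_depthWeight]
  exact Sig.choose_le_depthWeight hσ.nonAlternating (by omega)
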